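/- For every disjunctive logic program P and X ∈ {E,A}, τ(P) ≡ˣ_oga τ'(P) for all τ, τ' ∈ {τ^∨_HP, τ^∨_EB, τ^∨_EH}; and if P is normal, then τ(P) ≡ˣ_oga τ'(P) for all τ, τ' ∈ {τ_HP, τ_EB, τ_EH, τ^∨_HP, τ^∨_EB, τ^∨_EH}. -/

import Mathlib

set_option autoImplicit false

/-! # First-order autoepistemic logic (FO-AEL): syntax -/

structure Sig : Type 1 where
  Func : Type
  Pred : Type
  arF : Func → ℕ
  arP : Pred → ℕ

inductive Term (S : Sig) : Type
  | var : ℕ → Term S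
  | func : (f : S.Func) → (Fin (S.arF f) → Term S) → Term S

inductive Formula (S : Sig) : Type
  | atom : (p : S.Pred) → (Fin (S.arP p) → Term S) → Formula S
  | eq : Term S → Term S → Formula S
  | not : Formula S → Formula S
  | and : Formula S → Formula S → Formula S
  | ex : ℕ → Formula S → Formula S
  | box : Formula S → Formula S

namespace Term

variable {S : Sig}

/-- A term is ground if it contains no variables; ground terms are the *names*. -/
def isGround : Term S → Prop
  | var _ => False
  | func _ ts => ∀ i, (ts i).isGround

def hasVar (x : ℕ) : Term S → Prop
  | var y => y = x
  | func _ ts => ∃ i, (ts i).hasVar x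

/-- Application of a partial (name) substitution to a term. -/
def subst (β : ℕ → Option (Term S)) : Term S → Term S
  | var x => (β x).getD (var x)
  | func f ts => func f (fun i => (ts i).subst β)

/-- The function symbols occurring in a term. -/
def funcs : Term S → Set S.Func
  | var _ => ∅
  | func f ts => insert f (⋃ i, (ts i).funcs)

/-- `t` is a name (ground term) over the set `F` of function symbols. -/
def isNameOf (F : Set S.Func) : Term S → Prop
  | var _ => False
  | func f ts => f ∈ F ∧ ∀ i, (ts i).isNameOf F

end Term

namespace Formula

variable {S : Sig}

/-- A formula is objective if it is 𝖫-free. -/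
def isObjective : Formula S → Prop
  | atom _ _ => True
  | eq _ _ => True
  | not φ => φ.isObjective
  | and φ ψ => φ.isObjective ∧ ψ.isObjective
  | ex _ φ => φ.isObjective
  | box _ => False

def isGround : Formula S → Prop
  | atom _ ts => ∀ i, (ts i).isGround
  | eq t₁ t₂ => t₁.isGround ∧ t₂.isGround
  | not φ => φ.isGround
  | and φ ψ => φ.isGround ∧ ψ.isGround
  | ex _ _ => False
  | box φ => φ.isGround

def isAtomic : Formula S → Prop
  | atom _ _ => True
  | eq _ _ => True
  | not _ => False
  | and _ _ => False
  | ex _ _ => False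
  | box _ => False

/-- The modal operator 𝖫 occurs only applied to (objective) atomic formulas. -/
def boxAtomic : Formula S → Prop
  | atom _ _ => True
  | eq _ _ => True
  | not φ => φ.boxAtomic
  | and φ ψ => φ.boxAtomic ∧ ψ.boxAtomic
  | ex _ φ => φ.boxAtomic
  | box φ => φ.isAtomic

/-- Propositional formulas: built from 0-ary predicates only. -/
def isPropositional : Formula S → Prop
  | atom p _ => S.arP p = 0
  | eq _ _ => False
  | not φ => φ.isPropositional
  | and φ ψ => φ.isPropositional ∧ ψ.isPropositional
  | ex _ _ => False
  | box _ => False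

def freeIn (x : ℕ) : Formula S → Prop
  | atom _ ts => ∃ i, (ts i).hasVar x
  | eq t₁ t₂ => t₁.hasVar x ∨ t₂.hasVar x
  | not φ => φ.freeIn x
  | and φ ψ => φ.freeIn x ∨ ψ.freeIn x
  | ex y φ => x ≠ y ∧ φ.freeIn x
  | box φ => φ.freeIn x

/-- A formula is closed (a sentence) if it has no free variables. -/
def closed (φ : Formula S) : Prop := ∀ x, ¬ φ.freeIn x

/-- Capture-avoiding application of a partial name substitution (values are ground). -/
def subst (β : ℕ → Option (Term S)) : Formula S → Formula S
  | atom p ts => atom p (fun i => (ts i).subst β)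
  | eq t₁ t₂ => eq (t₁.subst β) (t₂.subst β)
  | not φ => not (φ.subst β)
  | and φ ψ => and (φ.subst β) (ψ.subst β)
  | ex y φ => ex y (φ.subst (fun z => if z = y then none else β z))
  | box φ => box (φ.subst β)

def funcs : Formula S → Set S.Func
  | atom _ ts => ⋃ i, (ts i).funcs
  | eq t₁ t₂ => t₁.funcs ∪ t₂.funcs
  | not φ => φ.funcs
  | and φ ψ => φ.funcs ∪ ψ.funcs
  | ex _ φ => φ.funcs
  | box φ => φ.funcs

def preds : Formula S → Set S.Pred
  | atom p _ => {p}
  | eq _ _ => ∅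
  | not φ => φ.preds
  | and φ ψ => φ.preds ∪ ψ.preds
  | ex _ φ => φ.preds
  | box φ => φ.preds

/-- `φ ∨ ψ` as an abbreviation: `¬(¬φ ∧ ¬ψ)`. -/
def or (φ ψ : Formula S) : Formula S := not (and (not φ) (not ψ))

/-- `φ ⊃ ψ` as an abbreviation: `¬(φ ∧ ¬ψ)`. -/
def imp (φ ψ : Formula S) : Formula S := not (and φ (not ψ))

/-- `∀x.φ` as an abbreviation: `¬∃x.¬φ`. -/
def all (x : ℕ) (φ : Formula S) : Formula S := not (ex x (not φ))

end Formula

/-! ## Semantics -/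

structure Interp (S : Sig) where
  U : Type
  nonempty : Nonempty U
  interpF : (f : S.Func) → (Fin (S.arF f) → U) → U
  interpP : (p : S.Pred) → (Fin (S.arP p) → U) → Prop

noncomputable def Interp.dflt {S : Sig} (w : Interp S) : w.U := Classical.choice w.nonempty

def Term.eval {S : Sig} (w : Interp S) (B : ℕ → w.U) : Term S → w.U
  | Term.var x => B x
  | Term.func f ts => w.interpF f (fun i => (ts i).eval w B)

/-- Evaluation of a ground term (the assignment is irrelevant). -/
noncomputable def Term.evalG {S : Sig} (w : Interp S) (t : Term S) : w.U :=
  t.eval w (fun _ => w.dflt)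

/-- An individual is named if some name (ground term) denotes it. -/
def IsNamed {S : Sig} (w : Interp S) (k : w.U) : Prop :=
  ∃ t : Term S, t.isGround ∧ Term.evalG w t = k

/-- A name substitution `β` is associated with the variable assignment `B`:
its domain is exactly the set of variables whose `B`-value is named, and
it assigns to each such variable a name denoting its `B`-value. -/
def Assoc {S : Sig} (w : Interp S) (B : ℕ → w.U) (β : ℕ → Option (Term S)) : Prop :=
  ∀ x : ℕ,
    (IsNamed w (B x) → (β x).isSome) ∧
    (∀ t : Term S, β x = some t → t.isGround ∧ Term.evalG w t = B x)

/-- The two semantics: any-name (E) and all-name (A). -/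
inductive Sem : Type
  | any
  | all

/-- Satisfaction of a formula in an autoepistemic interpretation `⟨w,Γ⟩`
under a variable assignment, for the any-name (E) resp. all-name (A) semantics. -/
def Sat {S : Sig} (X : Sem) (w : Interp S) (Γ : Set (Formula S)) :
    Formula S → (ℕ → w.U) → Prop
  | Formula.atom p ts, B => w.interpP p (fun i => (ts i).eval w B)
  | Formula.eq t₁ t₂, B => t₁.eval w B = t₂.eval w B
  | Formula.not φ, B => ¬ Sat X w Γ φ B
  | Formula.and φ ψ, B => Sat X w Γ φ B ∧ Sat X w Γ ψ B
  | Formula.ex x φ, B => ∃ u : w.U, Sat X w Γ φ (Function.update B x u)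
  | Formula.box φ, B =>
      match X with
      | Sem.any => ∃ β, Assoc w B β ∧ (φ.subst β).closed ∧ φ.subst β ∈ Γ
      | Sem.all => ∀ β, Assoc w B β → (φ.subst β).closed ∧ φ.subst β ∈ Γ

def ModelsF {S : Sig} (X : Sem) (w : Interp S) (Γ : Set (Formula S)) (φ : Formula S) : Prop :=
  ∀ B : ℕ → w.U, Sat X w Γ φ B

def ModelsT {S : Sig} (X : Sem) (w : Interp S) (Γ Φ : Set (Formula S)) : Prop :=
  ∀ φ ∈ Φ, ModelsF X w Γ φ

/-- `Φ ⊨ˣ_Γ φ`. -/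
def Entails {S : Sig} (X : Sem) (Φ Γ : Set (Formula S)) (φ : Formula S) : Prop :=
  ∀ w : Interp S, ModelsT X w Γ Φ → ModelsF X w Γ φ

/-- The standard names assumption: all names are interpreted distinctly
and every individual is named. -/
def SNA {S : Sig} (w : Interp S) : Prop :=
  (∀ t₁ t₂ : Term S, t₁.isGround → t₂.isGround → Term.evalG w t₁ = Term.evalG w t₂ → t₁ = t₂) ∧
  (∀ k : w.U, IsNamed w k)

/-- Entailment restricted to interpretations satisfying the standard names assumption. -/
def EntailsSN {S : Sig} (X : Sem) (Φ Γ : Set (Formula S)) (φ : Formula S) : Prop :=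
  ∀ w : Interp S, SNA w → ModelsT X w Γ Φ → ModelsF X w Γ φ

/-- `T` is a stableˣ expansion of `Φ`. -/
def StableExp {S : Sig} (X : Sem) (Φ T : Set (Formula S)) : Prop :=
  T = {φ | Entails X Φ T φ}

def objOf {S : Sig} (T : Set (Formula S)) : Set (Formula S) :=
  {φ ∈ T | φ.isObjective}

def ogOf {S : Sig} (T : Set (Formula S)) : Set (Formula S) :=
  {φ ∈ T | φ.isObjective ∧ φ.isGround}

def ogaOf {S : Sig} (T : Set (Formula S)) : Set (Formula S) :=
  {φ ∈ T | φ.isObjective ∧ φ.isGround ∧ φ.isAtomic}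

def Consistent {S : Sig} (T : Set (Formula S)) : Prop := T ≠ Set.univ

/-- `Φ₁ ≡ˣ Φ₂`: same stableˣ expansions. -/
def ExpEquiv {S : Sig} (X : Sem) (Φ₁ Φ₂ : Set (Formula S)) : Prop :=
  ∀ T, StableExp X Φ₁ T ↔ StableExp X Φ₂ T

/-- `Φ₁ ≡ˣ_γ Φ₂` for a selector `sel` (e.g. `ogaOf`): the stableˣ expansions
correspond with respect to `sel`. -/
def ExpEquivSel {S : Sig} (X : Sem) (sel : Set (Formula S) → Set (Formula S))
    (Φ₁ Φ₂ : Set (Formula S)) : Prop :=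
  (∀ T, StableExp X Φ₁ T → ∃ T', StableExp X Φ₂ T' ∧ sel T = sel T') ∧
  (∀ T', StableExp X Φ₂ T' → ∃ T, StableExp X Φ₁ T ∧ sel T = sel T')

/-- Autoepistemicˣ consequences of `Φ`. -/
def Cn {S : Sig} (X : Sem) (Φ : Set (Formula S)) : Set (Formula S) :=
  {φ | ∀ T, StableExp X Φ T → φ ∈ T}

def CnO {S : Sig} (X : Sem) (Φ : Set (Formula S)) : Set (Formula S) :=
  {φ ∈ Cn X Φ | φ.isObjective}

def CnOg {S : Sig} (X : Sem) (Φ : Set (Formula S)) : Set (Formula S) :=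
  {φ ∈ Cn X Φ | φ.isObjective ∧ φ.isGround}

/-! ## Logic programs -/

structure PAtom (S : Sig) where
  p : S.Pred
  args : Fin (S.arP p) → Term S

namespace PAtom

variable {S : Sig}

def toFormula (a : PAtom S) : Formula S := Formula.atom a.p a.args

def isGround (a : PAtom S) : Prop := ∀ i, (a.args i).isGround

def hasVar (x : ℕ) (a : PAtom S) : Prop := ∃ i, (a.args i).hasVar x

def substA (σ : ℕ → Term S) (a : PAtom S) : PAtom S :=
  ⟨a.p, fun i => (a.args i).subst (fun x => some (σ x))⟩

def funcs (a : PAtom S) : Set S.Func := ⋃ i, (a.args i).funcs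

end PAtom

/-- A (disjunctive) rule `h₁ | … | h_l ← b₁,…,b_m, not c₁,…,not c_n`,
together with a list of the variables occurring in it. -/
structure Rule (S : Sig) where
  head : List (PAtom S)
  pos : List (PAtom S)
  neg : List (PAtom S)
  vars : List ℕ

namespace Rule

variable {S : Sig}

def atoms (r : Rule S) : List (PAtom S) := r.head ++ r.pos ++ r.neg

def hasVar (x : ℕ) (r : Rule S) : Prop := ∃ a ∈ r.atoms, PAtom.hasVar x a

/-- Well-formedness: at least one head atom, and `vars` lists all variables of the rule. -/
def wf (r : Rule S) : Prop := r.head ≠ [] ∧ ∀ x, r.hasVar x → x ∈ r.vars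

def isNormal (r : Rule S) : Prop := r.head.length = 1

def isGround (r : Rule S) : Prop := (∀ a ∈ r.atoms, a.isGround) ∧ r.vars = []

def isSafe (r : Rule S) : Prop := ∀ x, r.hasVar x → ∃ a ∈ r.pos, PAtom.hasVar x a

def isPositive (r : Rule S) : Prop := r.neg = []

def applySubst (σ : ℕ → Term S) (r : Rule S) : Rule S :=
  ⟨r.head.map (PAtom.substA σ), r.pos.map (PAtom.substA σ), r.neg.map (PAtom.substA σ), []⟩

end Rule

abbrev Program (S : Sig) := Set (Rule S)

def progWf {S : Sig} (P : Program S) : Prop := ∀ r ∈ P, r.wf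
def progNormal {S : Sig} (P : Program S) : Prop := ∀ r ∈ P, r.isNormal
def progGround {S : Sig} (P : Program S) : Prop := ∀ r ∈ P, r.isGround
def progSafe {S : Sig} (P : Program S) : Prop := ∀ r ∈ P, r.isSafe
def progPositive {S : Sig} (P : Program S) : Prop := ∀ r ∈ P, r.isPositive

/-- The function symbols occurring in `P` (part of the signature `Σ_P`). -/
def progFuncs {S : Sig} (P : Program S) : Set S.Func :=
  {f | ∃ r ∈ P, ∃ a ∈ r.atoms, f ∈ a.funcs}

/-- The predicate symbols occurring in `P` (part of the signature `Σ_P`). -/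
def progPreds {S : Sig} (P : Program S) : Set S.Pred :=
  {q | ∃ r ∈ P, ∃ a ∈ r.atoms, a.p = q}

/-- The ambient signature is exactly the signature `Σ_P` of `P`. -/
def fullSig {S : Sig} (P : Program S) : Prop :=
  (∀ f : S.Func, f ∈ progFuncs P) ∧ (∀ q : S.Pred, q ∈ progPreds P)

/-- Standing assumption: `Σ_P` contains a 0-ary function symbol whenever it
has a predicate symbol of arity greater than 0. -/
def goodSig {S : Sig} (P : Program S) : Prop :=
  (∃ q ∈ progPreds P, 0 < S.arP q) → ∃ f ∈ progFuncs P, S.arF f = 0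

/-! ## Embeddings of logic programs into FO-AEL -/

def andAll {S : Sig} : Formula S → List (Formula S) → Formula S
  | φ, [] => φ
  | φ, ψ :: rest => andAll (Formula.and φ ψ) rest

def orAll {S : Sig} : Formula S → List (Formula S) → Formula S
  | φ, [] => φ
  | φ, ψ :: rest => orAll (Formula.or φ ψ) rest

/-- `impOf ants c` is `⋀ ants ⊃ c` (just `c` if there are no antecedents). -/
def impOf {S : Sig} : List (Formula S) → Formula S → Formula S
  | [], c => c
  | a :: rest, c => Formula.imp (andAll a rest) c

/-- Disjunction of a nonempty list (junk value on the empty list,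
which is excluded by rule well-formedness). -/
def disjOf {S : Sig} : List (Formula S) → Formula S
  | [] => Formula.eq (Term.var 0) (Term.var 0)
  | h :: rest => orAll h rest

/-- Universal uclosure over the listed variables. -/
def uclosure {S : Sig} (vs : List ℕ) (φ : Formula S) : Formula S :=
  vs.foldr Formula.all φ

def bodyHP {S : Sig} (r : Rule S) : List (Formula S) :=
  r.pos.map PAtom.toFormula ++ r.neg.map (fun c => Formula.not (Formula.box c.toFormula))

def bodyE {S : Sig} (r : Rule S) : List (Formula S) :=
  r.pos.map (fun b => Formula.and b.toFormula (Formula.box b.toFormula)) ++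
    r.neg.map (fun c => Formula.not (Formula.box c.toFormula))

/-- `τ_HP(r)` resp. `τ^∨_HP(r)`. -/
def embHP {S : Sig} (r : Rule S) : Formula S :=
  uclosure r.vars (impOf (bodyHP r) (disjOf (r.head.map PAtom.toFormula)))

/-- `τ_EB(r)` resp. `τ^∨_EB(r)`. -/
def embEB {S : Sig} (r : Rule S) : Formula S :=
  uclosure r.vars (impOf (bodyE r) (disjOf (r.head.map PAtom.toFormula)))

/-- `τ_EH(r)` resp. `τ^∨_EH(r)`. -/
def embEH {S : Sig} (r : Rule S) : Formula S :=
  uclosure r.vars (impOf (bodyE r)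
    (disjOf (r.head.map (fun h => Formula.and h.toFormula (Formula.box h.toFormula)))))

/-- The unique-names axioms `¬𝖫(t₁=t₂) ⊃ t₁≠t₂` for distinct names of `Σ_P`. -/
def UNAax {S : Sig} (P : Program S) : Set (Formula S) :=
  {φ | ∃ t₁ t₂ : Term S, t₁.isNameOf (progFuncs P) ∧ t₂.isNameOf (progFuncs P) ∧ t₁ ≠ t₂ ∧
        φ = Formula.imp (Formula.not (Formula.box (Formula.eq t₁ t₂)))
              (Formula.not (Formula.eq t₁ t₂))}

/-- The positive introspection axioms `α ⊃ 𝖫α` for objective ground atoms of `Σ_P`. -/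
def PIAax {S : Sig} (P : Program S) : Set (Formula S) :=
  {φ | ∃ a : PAtom S, a.p ∈ progPreds P ∧ (∀ i, (a.args i).isNameOf (progFuncs P)) ∧
        φ = Formula.imp a.toFormula (Formula.box a.toFormula)}

def ruleEmb {S : Sig} (emb : Rule S → Formula S) (P : Program S) : Set (Formula S) :=
  {φ | ∃ r ∈ P, φ = emb r}

def tauHP {S : Sig} (P : Program S) : Set (Formula S) := ruleEmb embHP P ∪ UNAax P
def tauEB {S : Sig} (P : Program S) : Set (Formula S) := ruleEmb embEB P ∪ UNAax P
def tauEH {S : Sig} (P : Program S) : Set (Formula S) := ruleEmb embEH P ∪ UNAax P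
def tauHPv {S : Sig} (P : Program S) : Set (Formula S) := ruleEmb embHP P ∪ PIAax P ∪ UNAax P
def tauEBv {S : Sig} (P : Program S) : Set (Formula S) := ruleEmb embEB P ∪ PIAax P ∪ UNAax P
def tauEHv {S : Sig} (P : Program S) : Set (Formula S) := ruleEmb embEH P ∪ UNAax P
def tauHPminus {S : Sig} (P : Program S) : Set (Formula S) := ruleEmb embHP P
def tauEHvminus {S : Sig} (P : Program S) : Set (Formula S) := ruleEmb embEH P

/-! ## Grounding and stable models -/

/-- The grounding of `P`: all ground instantiations of rules of `P`
obtained by replacing variables with names of `Σ_P`. -/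
def grP {S : Sig} (P : Program S) : Program S :=
  {r' | ∃ r ∈ P, ∃ σ : ℕ → Term S,
        (∀ x, r.hasVar x → (σ x).isNameOf (progFuncs P)) ∧ r' = Rule.applySubst σ r}

/-- A Herbrand interpretation: a set of ground atomic formulas. -/
def HerbrandI {S : Sig} (M : Set (Formula S)) : Prop :=
  ∀ φ ∈ M, φ.isAtomic ∧ φ.isGround

/-- `M` is a Herbrand model of the positive ground program `Q` (relative to the
names of `Σ_P`): rules are satisfied and `t = t ∈ M` for every name `t`. -/
def HerbrandModelOf {S : Sig} (P Q : Program S) (M : Set (Formula S)) : Prop :=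
  HerbrandI M ∧
  (∀ r ∈ Q, (∀ b ∈ r.pos, PAtom.toFormula b ∈ M) → ∃ h ∈ r.head, PAtom.toFormula h ∈ M) ∧
  (∀ t : Term S, t.isNameOf (progFuncs P) → Formula.eq t t ∈ M)

/-- The Gelfond–Lifschitz reduct of `gr(P)` with respect to `M`. -/
def reduct {S : Sig} (P : Program S) (M : Set (Formula S)) : Program S :=
  {r' | ∃ r ∈ grP P, (∀ c ∈ r.neg, PAtom.toFormula c ∉ M) ∧
        r' = ⟨r.head, r.pos, [], r.vars⟩}

/-- `M` is a stable model of `P`: a minimal Herbrand model of the reduct of `gr(P)` w.r.t. `M`. -/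
def isStableModel {S : Sig} (P : Program S) (M : Set (Formula S)) : Prop :=
  HerbrandModelOf P (reduct P M) M ∧
  ∀ M', M' ⊆ M → HerbrandModelOf P (reduct P M) M' → M' = M

/-! ## First-order theories and classes thereof -/

/-- An FO theory: a set of objective sentences. -/
def FOTheory {S : Sig} (Φ : Set (Formula S)) : Prop :=
  ∀ φ ∈ Φ, φ.isObjective ∧ φ.closed

def theoryFuncs {S : Sig} (Φ : Set (Formula S)) : Set S.Func := {f | ∃ φ ∈ Φ, f ∈ φ.funcs}
def theoryPreds {S : Sig} (Φ : Set (Formula S)) : Set S.Pred := {q | ∃ φ ∈ Φ, q ∈ φ.preds}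

/-- The ambient signature is exactly the union of the signatures of `Φ` and `P`. -/
def CoverSig {S : Sig} (Φ : Set (Formula S)) (P : Program S) : Prop :=
  (∀ f : S.Func, f ∈ theoryFuncs Φ ∪ progFuncs P) ∧
  (∀ q : S.Pred, q ∈ theoryPreds Φ ∪ progPreds P)

def exClosure {S : Sig} (ys : List ℕ) (φ : Formula S) : Formula S := ys.foldr Formula.ex φ

/-- A Horn sentence `(∀)(b₁ ∧ … ∧ b_n ⊃ h)` with atomic `b_i`, `h`
(the consequent `h` may be absent). -/
def isHornSentence {S : Sig} (φ : Formula S) : Prop :=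
  ∃ (vs : List ℕ) (bs : List (Formula S)),
    (∀ b ∈ bs, b.isAtomic) ∧
    ((∃ h : Formula S, h.isAtomic ∧ φ = uclosure vs (impOf bs h)) ∨
     (∃ b rest, bs = b :: rest ∧ φ = uclosure vs (Formula.not (andAll b rest))))

def HornTheory {S : Sig} (Φ : Set (Formula S)) : Prop :=
  FOTheory Φ ∧ ∀ φ ∈ Φ, isHornSentence φ

/-- A generalized Horn sentence `(∀)(b₁ ∧ … ∧ b_n ⊃ ∃ȳ.h)` with atomic `b_i`, `h`,
the variables `ȳ` occurring only in `h` (the consequent may be absent). -/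
def isGHornSentence {S : Sig} (φ : Formula S) : Prop :=
  ∃ (vs : List ℕ) (bs : List (Formula S)),
    (∀ b ∈ bs, b.isAtomic) ∧
    ((∃ (ys : List ℕ) (h : Formula S), h.isAtomic ∧
        (∀ y ∈ ys, ∀ b ∈ bs, ¬ b.freeIn y) ∧
        φ = uclosure vs (impOf bs (exClosure ys h))) ∨
     (∃ b rest, bs = b :: rest ∧ φ = uclosure vs (Formula.not (andAll b rest))))

def GHornTheory {S : Sig} (Φ : Set (Formula S)) : Prop :=
  FOTheory Φ ∧ ∀ φ ∈ Φ, isGHornSentence φ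

def PropTheory {S : Sig} (Φ : Set (Formula S)) : Prop :=
  FOTheory Φ ∧ ∀ φ ∈ Φ, φ.isPropositional

/-!
Every embedding captures the stable models of `P`: the objective ground atomic parts of its
stable expansions are exactly the stable models, whatever the semantics.

When 𝖫 is applied only to atoms, an expansion is determined by its objective ground atomic part
`A`, which is a fixpoint of ground atomic consequence. The unique-names axioms reduce
this consequence to Herbrand interpretations, so `A` consists of the ground atoms common to
all Herbrand models of the ground program in which 𝖫-literals are evaluated in `A`. Given a model
`H` of this kind, `H ∩ A` is a model of the reduct of the ground program with respect to `A` as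
soon as heads true in `H` lie in `A`, which is what the positive introspection axioms and the
𝖫 in heads ensure. For a normal program the single head atom leaves no choice to be controlled.
-/

section

variable {S : Sig}

/-! ### Terms and atomic formulas -/

namespace Term

theorem isGround_iff_forall_not_hasVar {t : Term S} : t.isGround ↔ ∀ x, ¬ t.hasVar x := by
  induction t with
  | var y => simp [isGround, hasVar]
  | func f ts ih =>
    simp only [isGround, hasVar, not_exists, ih]
    exact forall_comm

theorem isNameOf.isGround {F : Set S.Func} {t : Term S} (ht : t.isNameOf F) : t.isGround := by
  induction t with
  | var x => exact ht
  | func f ts ih => exact fun i ↦ ih i (ht.2 i)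

theorem isNameOf_iff_isGround {F : Set S.Func} (hF : ∀ f, f ∈ F) {t : Term S} :
    t.isNameOf F ↔ t.isGround := by
  induction t with
  | var x => exact Iff.rfl
  | func f ts ih => simp only [isNameOf, isGround, hF, ih, true_and]

theorem isGround.subst_eq {t : Term S} (ht : t.isGround) (β : ℕ → Option (Term S)) :
    t.subst β = t := by
  induction t with
  | var x => exact ht.elim
  | func f ts ih => exact congrArg (func f) (funext fun i ↦ ih i (ht i))

theorem isGround_subst {t : Term S} {β : ℕ → Option (Term S)}
    (h : ∀ x, t.hasVar x → ∃ s, β x = some s ∧ s.isGround) : (t.subst β).isGround := by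
  induction t with
  | var x =>
    obtain ⟨s, hs, hground⟩ := h x rfl
    simpa only [subst, hs, Option.getD_some] using hground
  | func f ts ih => exact fun i ↦ ih i fun x hx ↦ h x ⟨i, hx⟩

theorem eval_congr {w : Interp S} {t : Term S} {B B' : ℕ → w.U}
    (h : ∀ x, t.hasVar x → B x = B' x) : t.eval w B = t.eval w B' := by
  induction t with
  | var x => exact h x rfl
  | func f ts ih => exact congrArg (w.interpF f) (funext fun i ↦ ih i fun x hx ↦ h x ⟨i, hx⟩)

theorem isGround.eval_eq_evalG {w : Interp S} {t : Term S} (ht : t.isGround) (B : ℕ → w.U) :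
    t.eval w B = t.evalG w :=
  eval_congr fun x hx ↦ (isGround_iff_forall_not_hasVar.1 ht x hx).elim

theorem eval_subst {w : Interp S} {t : Term S} {β : ℕ → Option (Term S)} {B B' : ℕ → w.U}
    (h : ∀ x, t.hasVar x → ((β x).getD (var x)).eval w B' = B x) :
    (t.subst β).eval w B' = t.eval w B := by
  induction t with
  | var x => exact h x rfl
  | func f ts ih => exact congrArg (w.interpF f) (funext fun i ↦ ih i fun x hx ↦ h x ⟨i, hx⟩)

end Term

namespace Formula

theorem isAtomic.isObjective {φ : Formula S} (h : φ.isAtomic) : φ.isObjective := by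
  cases φ <;> trivial

theorem isAtomic.subst {φ : Formula S} (h : φ.isAtomic) (β : ℕ → Option (Term S)) :
    (φ.subst β).isAtomic := by
  cases φ <;> trivial

theorem isAtomic.closed_iff_isGround {φ : Formula S} (h : φ.isAtomic) :
    φ.closed ↔ φ.isGround := by
  cases φ with
  | atom p ts =>
    simp only [closed, freeIn, isGround, not_exists, Term.isGround_iff_forall_not_hasVar]
    exact forall_comm
  | eq t t' =>
    simp only [closed, freeIn, isGround, not_or, Term.isGround_iff_forall_not_hasVar, forall_and]
  | _ => exact h.elim

theorem isAtomic.subst_eq {φ : Formula S} (h : φ.isAtomic) (hg : φ.isGround)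
    (β : ℕ → Option (Term S)) : φ.subst β = φ := by
  cases φ with
  | atom p ts => exact congrArg (atom p) (funext fun i ↦ (hg i).subst_eq β)
  | eq t t' => exact congrArg₂ eq (hg.1.subst_eq β) (hg.2.subst_eq β)
  | _ => exact h.elim

end Formula

/-! ### Dependence of satisfaction on the belief set -/

namespace Formula

/-- The nesting depth of 𝖫, the measure along which belief sets are built. -/
def modalDepth : Formula S → ℕ
  | atom _ _ => 0
  | eq _ _ => 0
  | not φ => φ.modalDepth
  | and φ ψ => max φ.modalDepth ψ.modalDepth
  | ex _ φ => φ.modalDepth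
  | box φ => φ.modalDepth + 1

/-- The arguments of the outermost occurrences of 𝖫: satisfaction consults the belief set only
at their substitution instances. -/
def boxed : Formula S → Set (Formula S)
  | atom _ _ => ∅
  | eq _ _ => ∅
  | not φ => φ.boxed
  | and φ ψ => φ.boxed ∪ ψ.boxed
  | ex _ φ => φ.boxed
  | box φ => {φ}

theorem modalDepth_subst (φ : Formula S) (β : ℕ → Option (Term S)) :
    (φ.subst β).modalDepth = φ.modalDepth := by
  induction φ generalizing β with
  | atom p ts => rfl
  | eq t t' => rfl
  | not _ ih => exact ih β
  | and φ ψ ihφ ihψ => exact congrArg₂ max (ihφ β) (ihψ β)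
  | ex _ _ ih => exact ih _
  | box _ ih => exact congrArg (· + 1) (ih β)

theorem modalDepth_lt_of_mem_boxed {φ ψ : Formula S} (h : ψ ∈ φ.boxed) :
    ψ.modalDepth < φ.modalDepth := by
  induction φ with
  | atom p ts => exact h.elim
  | eq t t' => exact h.elim
  | not φ ih => exact ih h
  | and φ χ ihφ ihχ => exact lt_max_iff.2 (h.imp ihφ ihχ)
  | ex y φ ih => exact ih h
  | box φ ih =>
    obtain rfl : ψ = φ := h
    exact Nat.lt_succ_self _

theorem boxAtomic.isAtomic_of_mem_boxed {φ ψ : Formula S} (hφ : φ.boxAtomic)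
    (h : ψ ∈ φ.boxed) : ψ.isAtomic := by
  induction φ with
  | atom p ts => exact h.elim
  | eq t t' => exact h.elim
  | not φ ih => exact ih hφ h
  | and φ χ ihφ ihχ => exact h.elim (ihφ hφ.1) (ihχ hφ.2)
  | ex y φ ih => exact ih hφ h
  | box φ ih =>
    obtain rfl : ψ = φ := h
    exact hφ

theorem isAtomic.boxed_eq_empty {φ : Formula S} (h : φ.isAtomic) : φ.boxed = ∅ := by
  cases φ <;> first | rfl | exact h.elim

end Formula

theorem sat_congr {X : Sem} {w : Interp S} {Γ Γ' : Set (Formula S)} {φ : Formula S}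
    (h : ∀ ψ ∈ φ.boxed, ∀ β, (ψ.subst β).closed → (ψ.subst β ∈ Γ ↔ ψ.subst β ∈ Γ'))
    (B : ℕ → w.U) : Sat X w Γ φ B ↔ Sat X w Γ' φ B := by
  induction φ generalizing B with
  | atom p ts => exact Iff.rfl
  | eq t t' => exact Iff.rfl
  | not φ ih => exact not_congr (ih h B)
  | and φ ψ ihφ ihψ =>
    exact and_congr (ihφ (fun χ hχ ↦ h χ (Or.inl hχ)) B) (ihψ (fun χ hχ ↦ h χ (Or.inr hχ)) B)
  | ex y φ ih => exact exists_congr fun u ↦ ih h _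
  | box φ ih =>
    have hmem := fun β ↦ and_congr_right (h φ rfl β)
    cases X with
    | any => exact exists_congr fun β ↦ and_congr_right fun _ ↦ hmem β
    | all => exact forall_congr' fun β ↦ imp_congr_right fun _ ↦ hmem β

theorem modelsF_congr_of_isAtomic {X : Sem} {w : Interp S} {φ : Formula S} (hφ : φ.isAtomic)
    (Γ Γ' : Set (Formula S)) : ModelsF X w Γ φ ↔ ModelsF X w Γ' φ :=
  forall_congr' <| sat_congr (by simp [hφ.boxed_eq_empty])

theorem mem_ogaOf_iff {T : Set (Formula S)} {φ : Formula S} :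
    φ ∈ ogaOf T ↔ φ ∈ T ∧ φ.isAtomic ∧ φ.isGround :=
  ⟨fun h ↦ ⟨h.1, h.2.2.2, h.2.2.1⟩, fun h ↦ ⟨h.1, h.2.1.isObjective, h.2.2, h.2.1⟩⟩

theorem modelsT_ogaOf_iff {X : Sem} {w : Interp S} {T Φ : Set (Formula S)}
    (hΦ : ∀ φ ∈ Φ, φ.boxAtomic) : ModelsT X w (ogaOf T) Φ ↔ ModelsT X w T Φ := by
  refine forall₂_congr fun φ hφ ↦ forall_congr' <| sat_congr fun ψ hψ β hclosed ↦ ?_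
  have hatom : (ψ.subst β).isAtomic := ((hΦ φ hφ).isAtomic_of_mem_boxed hψ).subst β
  simp [mem_ogaOf_iff, hatom, hatom.closed_iff_isGround.1 hclosed]

/-! ### Stable expansions and atomic kernels -/

/-- The formula `φ` is believed by an agent that considers the interpretations in `C` possible
and introspects; defined by recursion on the modal depth. -/
def Believed (X : Sem) (C : Set (Interp S)) (φ : Formula S) : Prop :=
  ∀ w ∈ C, ModelsF X w {ψ | ∃ _ : ψ.modalDepth < φ.modalDepth, Believed X C ψ} φ
termination_by φ.modalDepth

theorem believed_iff {X : Sem} {C : Set (Interp S)} {φ : Formula S} :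
    Believed X C φ ↔ ∀ w ∈ C, ModelsF X w {ψ | Believed X C ψ} φ := by
  rw [Believed]
  refine forall₂_congr fun w _ ↦ forall_congr' <| sat_congr fun ψ hψ β _ ↦ ?_
  have hlt : (ψ.subst β).modalDepth < φ.modalDepth :=
    (ψ.modalDepth_subst β).trans_lt (Formula.modalDepth_lt_of_mem_boxed hψ)
  simp [hlt]

/-- `A` is a fixpoint of objective ground atomic consequence from `Φ`. For theories with 𝖫
applied only to atoms, these are the objective ground atomic parts of the stable expansions. -/
def IsAtomicKernel (X : Sem) (Φ A : Set (Formula S)) : Prop :=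
  A = ogaOf {φ | Entails X Φ A φ}

theorem isAtomicKernel_iff {X : Sem} {Φ A : Set (Formula S)} :
    IsAtomicKernel X Φ A ↔ HerbrandI A ∧
      (∀ t t' : Term S, t.isGround → t'.isGround →
        (Formula.eq t t' ∈ A ↔ Entails X Φ A (Formula.eq t t'))) ∧
      ∀ a : PAtom S, a.isGround → (a.toFormula ∈ A ↔ Entails X Φ A a.toFormula) := by
  have hiff : IsAtomicKernel X Φ A ↔
      ∀ φ, φ ∈ A ↔ Entails X Φ A φ ∧ φ.isAtomic ∧ φ.isGround :=
    Set.ext_iff.trans (forall_congr' fun φ ↦ by rw [mem_ogaOf_iff]; rfl)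
  rw [hiff]
  constructor
  · intro h
    exact ⟨fun φ hφ ↦ ((h φ).1 hφ).2,
      fun t t' ht ht' ↦ ⟨fun he ↦ ((h _).1 he).1, fun he ↦ (h _).2 ⟨he, trivial, ht, ht'⟩⟩,
      fun a ha ↦ ⟨fun hA ↦ ((h _).1 hA).1, fun hA ↦ (h _).2 ⟨hA, trivial, ha⟩⟩⟩
  · rintro ⟨hherbrand, heq, hatom⟩ φ
    by_cases hφ : φ.isAtomic ∧ φ.isGround
    · simp only [hφ, and_true]
      cases φ with
      | atom p ts => exact hatom ⟨p, ts⟩ hφ.2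
      | eq t t' => exact heq t t' hφ.2.1 hφ.2.2
      | _ => exact hφ.1.elim
    · exact iff_of_false (fun h ↦ hφ (hherbrand φ h)) fun h ↦ hφ h.2

theorem StableExp.isAtomicKernel_ogaOf {X : Sem} {Φ T : Set (Formula S)}
    (hΦ : ∀ φ ∈ Φ, φ.boxAtomic) (hT : StableExp X Φ T) : IsAtomicKernel X Φ (ogaOf T) := by
  ext φ
  nth_rewrite 1 [hT]
  simp only [mem_ogaOf_iff, Set.mem_ofPred_eq]
  refine and_congr_left fun hφ ↦ forall_congr' fun w ↦ ?_
  rw [modelsT_ogaOf_iff hΦ, modelsF_congr_of_isAtomic hφ.1]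

theorem IsAtomicKernel.exists_stableExp {X : Sem} {Φ A : Set (Formula S)}
    (hΦ : ∀ φ ∈ Φ, φ.boxAtomic) (hA : IsAtomicKernel X Φ A) :
    ∃ T, StableExp X Φ T ∧ ogaOf T = A := by
  set T : Set (Formula S) := {φ | Believed X {w | ModelsT X w A Φ} φ}
  have hT (φ : Formula S) : φ ∈ T ↔ ∀ w, ModelsT X w A Φ → ModelsF X w T φ := believed_iff
  have hTA : ogaOf T = A := by
    rw [hA]
    ext φ
    simp only [mem_ogaOf_iff, hT]
    exact and_congr_left fun hφ ↦ forall₂_congr fun w _ ↦ modelsF_congr_of_isAtomic hφ.1 T A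
  refine ⟨T, Set.ext fun φ ↦ (hT φ).trans (forall_congr' fun w ↦ ?_), hTA⟩
  rw [← hTA, modelsT_ogaOf_iff hΦ]

theorem exists_stableExp_ogaOf_eq_iff {X : Sem} {Φ A : Set (Formula S)}
    (hΦ : ∀ φ ∈ Φ, φ.boxAtomic) :
    (∃ T, StableExp X Φ T ∧ ogaOf T = A) ↔ IsAtomicKernel X Φ A :=
  ⟨fun ⟨_, hT, hA⟩ ↦ hA ▸ hT.isAtomicKernel_ogaOf hΦ, fun hA ↦ hA.exists_stableExp hΦ⟩

theorem expEquivSel_of_forall_exists_iff {X : Sem} {sel : Set (Formula S) → Set (Formula S)}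
    {Φ₁ Φ₂ : Set (Formula S)}
    (h : ∀ A, (∃ T, StableExp X Φ₁ T ∧ sel T = A) ↔ ∃ T, StableExp X Φ₂ T ∧ sel T = A) :
    ExpEquivSel X sel Φ₁ Φ₂ := by
  refine ⟨fun T hT ↦ ?_, fun T' hT' ↦ (h _).2 ⟨T', hT', rfl⟩⟩
  obtain ⟨T', hT', he⟩ := (h _).1 ⟨T, hT, rfl⟩
  exact ⟨T', hT', he.symm⟩

/-! ### Derived connectives -/

section Connectives

variable {X : Sem} {w : Interp S} {Γ : Set (Formula S)} {B : ℕ → w.U}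

theorem sat_imp {φ ψ : Formula S} :
    Sat X w Γ (φ.imp ψ) B ↔ (Sat X w Γ φ B → Sat X w Γ ψ B) := by
  simp only [Formula.imp, Sat, not_and_not_right]

theorem sat_or {φ ψ : Formula S} :
    Sat X w Γ (φ.or ψ) B ↔ Sat X w Γ φ B ∨ Sat X w Γ ψ B := by
  simp only [Formula.or, Sat, not_and_or, not_not]

theorem sat_andAll {φ : Formula S} {l : List (Formula S)} :
    Sat X w Γ (andAll φ l) B ↔ Sat X w Γ φ B ∧ ∀ ψ ∈ l, Sat X w Γ ψ B := by
  induction l generalizing φ with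
  | nil => simp [andAll]
  | cons ψ l ih => simp [andAll, ih, Sat, and_assoc]

theorem sat_orAll {φ : Formula S} {l : List (Formula S)} :
    Sat X w Γ (orAll φ l) B ↔ Sat X w Γ φ B ∨ ∃ ψ ∈ l, Sat X w Γ ψ B := by
  induction l generalizing φ with
  | nil => simp [orAll]
  | cons ψ l ih => simp [orAll, ih, sat_or, or_assoc]

theorem sat_impOf {l : List (Formula S)} {φ : Formula S} :
    Sat X w Γ (impOf l φ) B ↔ ((∀ ψ ∈ l, Sat X w Γ ψ B) → Sat X w Γ φ B) := by
  cases l with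
  | nil => simp [impOf]
  | cons ψ l => simp [impOf, sat_imp, sat_andAll]

theorem sat_disjOf {l : List (Formula S)} (hl : l ≠ []) :
    Sat X w Γ (disjOf l) B ↔ ∃ ψ ∈ l, Sat X w Γ ψ B := by
  cases l with
  | nil => exact (hl rfl).elim
  | cons ψ l => simp [disjOf, sat_orAll]

theorem modelsF_all_iff {x : ℕ} {φ : Formula S} :
    ModelsF X w Γ (φ.all x) ↔ ModelsF X w Γ φ := by
  simp only [ModelsF, Formula.all, Sat, not_exists, not_not]
  exact ⟨fun h B ↦ by simpa only [Function.update_eq_self] using h B (B x), fun h B u ↦ h _⟩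

theorem modelsF_uclosure_iff {vs : List ℕ} {φ : Formula S} :
    ModelsF X w Γ (uclosure vs φ) ↔ ModelsF X w Γ φ := by
  induction vs with
  | nil => exact Iff.rfl
  | cons _ _ ih => exact modelsF_all_iff.trans ih

theorem boxAtomic_andAll {φ : Formula S} {l : List (Formula S)} (hφ : φ.boxAtomic)
    (hl : ∀ ψ ∈ l, ψ.boxAtomic) : (andAll φ l).boxAtomic := by
  induction l generalizing φ with
  | nil => exact hφ
  | cons ψ l ih =>
    rw [List.forall_mem_cons] at hl
    exact ih ⟨hφ, hl.1⟩ hl.2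

theorem boxAtomic_orAll {φ : Formula S} {l : List (Formula S)} (hφ : φ.boxAtomic)
    (hl : ∀ ψ ∈ l, ψ.boxAtomic) : (orAll φ l).boxAtomic := by
  induction l generalizing φ with
  | nil => exact hφ
  | cons ψ l ih =>
    rw [List.forall_mem_cons] at hl
    exact ih ⟨hφ, hl.1⟩ hl.2

theorem boxAtomic_impOf {l : List (Formula S)} {φ : Formula S}
    (hl : ∀ ψ ∈ l, ψ.boxAtomic) (hφ : φ.boxAtomic) : (impOf l φ).boxAtomic := by
  cases l with
  | nil => exact hφ
  | cons ψ l =>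
    rw [List.forall_mem_cons] at hl
    exact ⟨boxAtomic_andAll hl.1 hl.2, hφ⟩

theorem boxAtomic_disjOf {l : List (Formula S)} (hl : ∀ ψ ∈ l, ψ.boxAtomic) :
    (disjOf l).boxAtomic := by
  cases l with
  | nil => trivial
  | cons ψ l =>
    rw [List.forall_mem_cons] at hl
    exact boxAtomic_orAll hl.1 hl.2

theorem boxAtomic_uclosure {vs : List ℕ} {φ : Formula S} (hφ : φ.boxAtomic) :
    (uclosure vs φ).boxAtomic := by
  induction vs with
  | nil => exact hφ
  | cons _ _ ih => exact ih

end Connectives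

/-! ### The embeddings as one family -/

/-- The choices that distinguish the six embeddings: whether body atoms `b` become `b ∧ 𝖫b`,
whether head atoms `h` become `h ∧ 𝖫h`, and whether the axioms PIA are added. -/
structure EmbeddingKind where
  boxBody : Bool
  boxHead : Bool
  introspective : Bool

/-- The formula `a ∧ 𝖫a` or `a`, according to the flag. -/
def PAtom.literal (boxed : Bool) (a : PAtom S) : Formula S :=
  bif boxed then a.toFormula.and a.toFormula.box else a.toFormula

namespace EmbeddingKind

variable (E : EmbeddingKind)

/-- The quantifier-free part of the embedding of a rule. -/
def matrix (r : Rule S) : Formula S :=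
  impOf (r.pos.map (PAtom.literal E.boxBody) ++ r.neg.map fun c ↦ c.toFormula.box.not)
    (disjOf (r.head.map (PAtom.literal E.boxHead)))

/-- The embedding of a program. -/
def theory (P : Program S) : Set (Formula S) :=
  ruleEmb (fun r ↦ uclosure r.vars (E.matrix r)) P ∪ (bif E.introspective then PIAax P else ∅) ∪
    UNAax P

/-- The condition under which an embedding of `P` captures its stable models: true heads must be
believed, except that nothing is needed when heads offer no choice. -/
def Adequate (P : Program S) : Prop :=
  E.introspective ∨ E.boxHead ∨ progNormal P

theorem boxAtomic_of_mem_theory {P : Program S} {φ : Formula S} (hφ : φ ∈ E.theory P) :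
    φ.boxAtomic := by
  have hliteral (e : Bool) (a : PAtom S) : (a.literal e).boxAtomic := by
    cases e <;> simp [PAtom.literal, PAtom.toFormula, Formula.boxAtomic, Formula.isAtomic]
  rcases hφ with (⟨r, _, rfl⟩ | hpia) | ⟨t, t', _, _, _, rfl⟩
  · refine boxAtomic_uclosure (boxAtomic_impOf ?_ (boxAtomic_disjOf ?_))
    · simp only [List.forall_mem_append, List.forall_mem_map]
      exact ⟨fun b _ ↦ hliteral _ b, fun c _ ↦ trivial⟩
    · exact List.forall_mem_map.2 fun h _ ↦ hliteral _ h
  · obtain ⟨_, a, _, _, rfl⟩ : E.introspective ∧ φ ∈ PIAax P := by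
      cases h : E.introspective <;> simp_all
    exact ⟨trivial, trivial⟩
  · exact ⟨trivial, trivial⟩

theorem exists_theory_eq_of_mem_disjunctive {τ : Program S → Set (Formula S)}
    (hτ : τ ∈ ({tauHPv, tauEBv, tauEHv} : Set (Program S → Set (Formula S)))) :
    ∃ E : EmbeddingKind, (E.introspective ∨ E.boxHead) ∧ τ = E.theory := by
  rcases hτ with rfl | rfl | rfl
  · exact ⟨⟨false, false, true⟩, Or.inl rfl, rfl⟩
  · exact ⟨⟨true, false, true⟩, Or.inl rfl, rfl⟩
  · exact ⟨⟨true, true, false⟩, Or.inr rfl, funext fun P ↦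
      congrArg (· ∪ UNAax P) (Set.union_empty _).symm⟩

theorem exists_theory_eq_of_mem {τ : Program S → Set (Formula S)}
    (hτ : τ ∈ ({tauHP, tauEB, tauEH, tauHPv, tauEBv, tauEHv} :
      Set (Program S → Set (Formula S)))) : ∃ E : EmbeddingKind, τ = E.theory := by
  rcases hτ with rfl | rfl | rfl | hτ
  · exact ⟨⟨false, false, false⟩, funext fun P ↦
      congrArg (· ∪ UNAax P) (Set.union_empty _).symm⟩
  · exact ⟨⟨true, false, false⟩, funext fun P ↦
      congrArg (· ∪ UNAax P) (Set.union_empty _).symm⟩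
  · exact ⟨⟨true, true, false⟩, funext fun P ↦
      congrArg (· ∪ UNAax P) (Set.union_empty _).symm⟩
  · obtain ⟨E, -, rfl⟩ := exists_theory_eq_of_mem_disjunctive hτ
    exact ⟨E, rfl⟩

end EmbeddingKind

/-! ### Satisfaction of modal atoms -/

theorem exists_assoc (w : Interp S) (B : ℕ → w.U) : ∃ β, Assoc w B β := by
  classical
  refine ⟨fun x ↦ if h : IsNamed w (B x) then some h.choose else none, fun x ↦ ⟨?_, ?_⟩⟩
  · intro h
    simp [h]
  · intro t ht
    obtain ⟨h, ht⟩ := Option.dite_none_right_eq_some.1 ht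
    obtain rfl : h.choose = t := Option.some.inj ht
    exact h.choose_spec

theorem Assoc.eval_subst {w : Interp S} {B : ℕ → w.U} {β : ℕ → Option (Term S)}
    (hβ : Assoc w B β) (t : Term S) : (t.subst β).eval w B = t.eval w B := by
  refine Term.eval_subst fun x _ ↦ ?_
  cases h : β x with
  | none => rfl
  | some s =>
    obtain ⟨hground, heval⟩ := (hβ x).2 s h
    exact (hground.eval_eq_evalG B).trans heval

theorem Assoc.exists_eq_some {w : Interp S} {B : ℕ → w.U} {β : ℕ → Option (Term S)}
    (hβ : Assoc w B β) {x : ℕ} (hx : IsNamed w (B x)) : ∃ s, β x = some s ∧ s.isGround := by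
  obtain ⟨s, hs⟩ := Option.isSome_iff_exists.1 ((hβ x).1 hx)
  exact ⟨s, hs, ((hβ x).2 s hs).1⟩

theorem sat_box_iff_of_forall_assoc {X : Sem} {w : Interp S} {Γ : Set (Formula S)}
    {φ : Formula S} {B : ℕ → w.U} {p : Prop}
    (h : ∀ β, Assoc w B β → (φ.subst β).closed ∧ (φ.subst β ∈ Γ ↔ p)) :
    Sat X w Γ φ.box B ↔ p := by
  obtain ⟨β₀, hβ₀⟩ := exists_assoc w B
  cases X with
  | any =>
    exact ⟨fun ⟨β, hβ, _, hmem⟩ ↦ (h β hβ).2.1 hmem,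
      fun hp ↦ ⟨β₀, hβ₀, (h β₀ hβ₀).1, (h β₀ hβ₀).2.2 hp⟩⟩
  | all =>
    exact ⟨fun hall ↦ (h β₀ hβ₀).2.1 (hall β₀ hβ₀).2,
      fun hp β hβ ↦ ⟨(h β hβ).1, (h β hβ).2.2 hp⟩⟩

theorem sat_box_iff_of_isGround {X : Sem} {w : Interp S} {Γ : Set (Formula S)} {φ : Formula S}
    (hφ : φ.isAtomic) (hg : φ.isGround) (B : ℕ → w.U) : Sat X w Γ φ.box B ↔ φ ∈ Γ :=
  sat_box_iff_of_forall_assoc fun β _ ↦ by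
    rw [hφ.subst_eq hg]
    exact ⟨hφ.closed_iff_isGround.2 hg, Iff.rfl⟩

/-- Whether a ground atom is believed depends only on the individuals that its arguments denote
in `w`; the any-name and all-name semantics then agree on modal atoms. -/
def BeliefCongr (w : Interp S) (A : Set (Formula S)) : Prop :=
  ∀ (p : S.Pred) (ts ts' : Fin (S.arP p) → Term S), (∀ i, (ts i).isGround) →
    (∀ i, (ts' i).isGround) → (∀ i, (ts i).evalG w = (ts' i).evalG w) →
    Formula.atom p ts ∈ A → Formula.atom p ts' ∈ A

/-- The substitution `σ` maps each of the variables in `V` to a name of its value under `B`. -/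
def Names (w : Interp S) (σ : ℕ → Term S) (B : ℕ → w.U) (V : ℕ → Prop) : Prop :=
  ∀ x, V x → (σ x).isGround ∧ (σ x).evalG w = B x

theorem PAtom.isGround_substA {σ : ℕ → Term S} {a : PAtom S}
    (hσ : ∀ x, a.hasVar x → (σ x).isGround) : (a.substA σ).isGround :=
  fun i ↦ Term.isGround_subst fun x hx ↦ ⟨σ x, rfl, hσ x ⟨i, hx⟩⟩

theorem Names.evalG_substA {w : Interp S} {σ : ℕ → Term S} {B : ℕ → w.U} {a : PAtom S}
    (hσ : Names w σ B fun x ↦ a.hasVar x) (i : Fin (S.arP a.p)) :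
    ((a.substA σ).args i).evalG w = (a.args i).eval w B :=
  Term.eval_subst fun x hx ↦ (hσ x ⟨i, hx⟩).2

theorem sat_box_toFormula_iff {X : Sem} {w : Interp S} {A : Set (Formula S)}
    (hA : BeliefCongr w A) {σ : ℕ → Term S} {B : ℕ → w.U} {a : PAtom S}
    (hσ : Names w σ B fun x ↦ a.hasVar x) :
    Sat X w A a.toFormula.box B ↔ (a.substA σ).toFormula ∈ A := by
  refine sat_box_iff_of_forall_assoc fun β hβ ↦ ?_
  have hβground (i : Fin (S.arP a.p)) : ((a.args i).subst β).isGround :=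
    Term.isGround_subst fun x hx ↦ hβ.exists_eq_some ⟨σ x, hσ x ⟨i, hx⟩⟩
  have hσground : (a.substA σ).isGround := PAtom.isGround_substA fun x hx ↦ (hσ x hx).1
  have heval (i : Fin (S.arP a.p)) :
      ((a.args i).subst β).evalG w = ((a.substA σ).args i).evalG w := by
    rw [hσ.evalG_substA, ← (hβground i).eval_eq_evalG B, hβ.eval_subst]
  exact ⟨(Formula.isAtomic.closed_iff_isGround (φ := a.toFormula.subst β) trivial).2 hβground,
    hA _ _ _ hβground hσground heval, hA _ _ _ hσground hβground fun i ↦ (heval i).symm⟩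

/-! ### Ground atomic formulas in an interpretation -/

theorem modelsF_eq_iff {X : Sem} {w : Interp S} {A : Set (Formula S)} {t t' : Term S}
    (ht : t.isGround) (ht' : t'.isGround) :
    ModelsF X w A (.eq t t') ↔ t.evalG w = t'.evalG w := by
  simp only [ModelsF, Sat, ht.eval_eq_evalG, ht'.eval_eq_evalG]
  exact ⟨fun h ↦ h fun _ ↦ w.dflt, fun h _ ↦ h⟩

/-- The atoms true in `w`. Meaningful for ground atoms only: variables denote the default
individual. -/
def Interp.trueAtoms (w : Interp S) : Set (PAtom S) :=
  {a | w.interpP a.p fun i ↦ (a.args i).evalG w}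

theorem sat_toFormula_iff_of_isGround {X : Sem} {w : Interp S} {A : Set (Formula S)}
    {a : PAtom S} (ha : a.isGround) (B : ℕ → w.U) :
    Sat X w A a.toFormula B ↔ a ∈ w.trueAtoms := by
  simp only [PAtom.toFormula, Sat, (ha _).eval_eq_evalG]
  rfl

theorem modelsF_toFormula_iff {X : Sem} {w : Interp S} {A : Set (Formula S)} {a : PAtom S}
    (ha : a.isGround) : ModelsF X w A a.toFormula ↔ a ∈ w.trueAtoms :=
  ⟨fun h ↦ (sat_toFormula_iff_of_isGround ha _).1 (h fun _ ↦ w.dflt),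
    fun h B ↦ (sat_toFormula_iff_of_isGround ha B).2 h⟩

theorem sat_toFormula_iff {X : Sem} {w : Interp S} {A : Set (Formula S)} {σ : ℕ → Term S}
    {B : ℕ → w.U} {a : PAtom S} (hσ : Names w σ B fun x ↦ a.hasVar x) :
    Sat X w A a.toFormula B ↔ a.substA σ ∈ w.trueAtoms := by
  simp only [PAtom.toFormula, Sat, ← hσ.evalG_substA]
  rfl

theorem modelsT_UNAax_iff {X : Sem} {w : Interp S} {A : Set (Formula S)} {P : Program S}
    (hF : ∀ f, f ∈ progFuncs P) :
    ModelsT X w A (UNAax P) ↔ ∀ t t' : Term S, t.isGround → t'.isGround →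
      t.evalG w = t'.evalG w → t = t' ∨ Formula.eq t t' ∈ A := by
  have hax {t t' : Term S} (ht : t.isGround) (ht' : t'.isGround) (B : ℕ → w.U) :
      Sat X w A (Formula.imp (Formula.not (Formula.eq t t').box) (Formula.not (.eq t t'))) B ↔
        (t.evalG w = t'.evalG w → Formula.eq t t' ∈ A) := by
    have hbox := sat_box_iff_of_isGround (X := X) (Γ := A) (φ := .eq t t') trivial ⟨ht, ht'⟩ B
    rw [sat_imp, Sat, hbox, Sat, Sat, not_imp_not, ht.eval_eq_evalG, ht'.eval_eq_evalG]
  constructor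
  · intro h t t' ht ht' he
    refine or_iff_not_imp_left.2 fun hne ↦ (hax ht ht' fun _ ↦ w.dflt).1 (h _ ?_ _) he
    exact ⟨t, t', (Term.isNameOf_iff_isGround hF).2 ht, (Term.isNameOf_iff_isGround hF).2 ht',
      hne, rfl⟩
  · rintro h φ ⟨t, t', ht, ht', hne, rfl⟩ B
    rw [Term.isNameOf_iff_isGround hF] at ht ht'
    exact (hax ht ht' B).2 fun he ↦ (h t t' ht ht' he).resolve_left hne

/-- `A` is closed under replacing arguments of ground atoms by terms believed equal. -/
def EqReplacementClosed (A : Set (Formula S)) : Prop :=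
  ∀ (p : S.Pred) (ts ts' : Fin (S.arP p) → Term S), (∀ i, (ts i).isGround) →
    (∀ i, (ts' i).isGround) → (∀ i, ts i = ts' i ∨ Formula.eq (ts i) (ts' i) ∈ A) →
    Formula.atom p ts ∈ A → Formula.atom p ts' ∈ A

theorem EqReplacementClosed.beliefCongr {X : Sem} {w : Interp S} {A : Set (Formula S)}
    {P : Program S} (hF : ∀ f, f ∈ progFuncs P) (hA : EqReplacementClosed A)
    (hw : ModelsT X w A (UNAax P)) : BeliefCongr w A :=
  fun p ts ts' hts hts' heval ↦ hA p ts ts' hts hts' fun i ↦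
    (modelsT_UNAax_iff hF).1 hw _ _ (hts i) (hts' i) (heval i)

theorem IsAtomicKernel.eqReplacementClosed {X : Sem} {Φ A : Set (Formula S)}
    (hA : IsAtomicKernel X Φ A) : EqReplacementClosed A := by
  obtain ⟨-, heq, hatom⟩ := isAtomicKernel_iff.1 hA
  intro p ts ts' hts hts' hreplace hmem
  refine (hatom ⟨p, ts'⟩ hts').2 fun w hw ↦ (modelsF_toFormula_iff (a := ⟨p, ts'⟩) hts').2 ?_
  have hts_true : (⟨p, ts⟩ : PAtom S) ∈ w.trueAtoms :=
    (modelsF_toFormula_iff (a := ⟨p, ts⟩) hts).1 ((hatom ⟨p, ts⟩ hts).1 hmem w hw)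
  have heval : (fun i ↦ (ts i).evalG w) = fun i ↦ (ts' i).evalG w := funext fun i ↦ by
    rcases hreplace i with h | h
    · rw [h]
    · exact (modelsF_eq_iff (hts i) (hts' i)).1 ((heq _ _ (hts i) (hts' i)).1 h w hw)
  change w.interpP p fun i ↦ (ts' i).evalG w
  rwa [← heval]

/-! ### Herbrand interpretations -/

/-- The domain of Herbrand interpretations: the ground terms, or all terms if there are no ground
terms, since domains are nonempty. -/
def HerbrandUniverse (S : Sig) : Type :=
  {t : Term S // t.isGround ∨ ∀ s : Term S, ¬ s.isGround}

instance : Nonempty (HerbrandUniverse S) := by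
  by_cases h : ∃ s : Term S, s.isGround
  · exact ⟨⟨h.choose, Or.inl h.choose_spec⟩⟩
  · exact ⟨⟨Term.var 0, Or.inr (not_exists.1 h)⟩⟩

/-- The Herbrand interpretation in which exactly the atoms in `H` are true. -/
def herbrandInterp (H : Set (PAtom S)) : Interp S where
  U := HerbrandUniverse S
  nonempty := inferInstance
  interpF f us := ⟨Term.func f fun i ↦ (us i).1,
    or_iff_not_imp_right.2 fun h i ↦ (us i).2.resolve_right h⟩
  interpP p us := (⟨p, fun i ↦ (us i).1⟩ : PAtom S) ∈ H

section Herbrand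

variable {H : Set (PAtom S)}

theorem herbrandInterp_eval (B : ℕ → HerbrandUniverse S) (t : Term S) :
    (t.eval (herbrandInterp H) B).1 = t.subst fun x ↦ some (B x).1 := by
  induction t with
  | var x => rfl
  | func f ts ih => exact congrArg (Term.func f) (funext ih)

theorem herbrandInterp_evalG {t : Term S} (ht : t.isGround) :
    (t.evalG (herbrandInterp H)).1 = t :=
  (herbrandInterp_eval _ t).trans (ht.subst_eq _)

theorem herbrandInterp_evalG_inj {t t' : Term S} (ht : t.isGround) (ht' : t'.isGround) :
    t.evalG (herbrandInterp H) = t'.evalG (herbrandInterp H) ↔ t = t' := by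
  refine ⟨fun h ↦ ?_, congrArg _⟩
  rw [← herbrandInterp_evalG ht, h, herbrandInterp_evalG ht']

theorem beliefCongr_herbrandInterp (A : Set (Formula S)) : BeliefCongr (herbrandInterp H) A := by
  intro p ts ts' hts hts' heval hmem
  have hts_eq : ts = ts' :=
    funext fun i ↦ (herbrandInterp_evalG_inj (hts i) (hts' i)).1 (heval i)
  rwa [← hts_eq]

theorem mem_trueAtoms_herbrandInterp_iff {a : PAtom S} (ha : a.isGround) :
    a ∈ (herbrandInterp H).trueAtoms ↔ a ∈ H := by
  have hargs : (fun i ↦ ((a.args i).evalG (herbrandInterp H)).1) = a.args :=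
    funext fun i ↦ herbrandInterp_evalG (ha i)
  change (⟨a.p, fun i ↦ ((a.args i).evalG (herbrandInterp H)).1⟩ : PAtom S) ∈ H ↔ a ∈ H
  rw [hargs]

end Herbrand

/-! ### Grounding and reducts -/

theorem exists_isGround_of_hasVar {P : Program S} (hgood : goodSig P) {r : Rule S} (hr : r ∈ P)
    {x : ℕ} (hx : r.hasVar x) : ∃ t : Term S, t.isGround := by
  obtain ⟨a, ha, i, -⟩ := hx
  obtain ⟨f, -, hf⟩ := hgood ⟨a.p, ⟨r, hr, a, ha, rfl⟩, i.pos⟩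
  exact ⟨Term.func f fun _ ↦ Term.var 0, fun j ↦ (Fin.cast hf j).elim0⟩

theorem applySubst_mem_grP {P : Program S} (hF : ∀ f, f ∈ progFuncs P) {r : Rule S} (hr : r ∈ P)
    {σ : ℕ → Term S} (hσ : ∀ x, r.hasVar x → (σ x).isGround) : r.applySubst σ ∈ grP P :=
  ⟨r, hr, σ, fun x hx ↦ (Term.isNameOf_iff_isGround hF).2 (hσ x hx), rfl⟩

theorem exists_substA_eq_of_mem_applySubst_atoms {r : Rule S} {σ : ℕ → Term S} {a : PAtom S}
    (ha : a ∈ (r.applySubst σ).atoms) : ∃ b ∈ r.atoms, b.substA σ = a := by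
  simpa only [Rule.atoms, Rule.applySubst, ← List.map_append, List.mem_map] using ha

theorem isGround_of_mem_grP {P : Program S} {r : Rule S} (hr : r ∈ grP P) {a : PAtom S}
    (ha : a ∈ r.atoms) : a.isGround := by
  obtain ⟨r, -, σ, hσ, rfl⟩ := hr
  obtain ⟨b, hb, rfl⟩ := exists_substA_eq_of_mem_applySubst_atoms ha
  exact PAtom.isGround_substA fun x hx ↦ (hσ x ⟨b, hb, hx⟩).isGround

theorem mem_progPreds_of_mem_grP {P : Program S} {r : Rule S} (hr : r ∈ grP P) {a : PAtom S}
    (ha : a ∈ r.atoms) : a.p ∈ progPreds P := by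
  obtain ⟨r, hr, σ, -, rfl⟩ := hr
  obtain ⟨b, hb, rfl⟩ := exists_substA_eq_of_mem_applySubst_atoms ha
  exact ⟨r, hr, b, hb, rfl⟩

theorem head_ne_nil_of_mem_grP {P : Program S} (hhead : ∀ r ∈ P, r.head ≠ []) {r : Rule S}
    (hr : r ∈ grP P) : r.head ≠ [] := by
  obtain ⟨r, hr, σ, -, rfl⟩ := hr
  exact List.map_eq_nil_iff.not.2 (hhead r hr)

theorem progNormal.exists_head_eq_of_mem_grP {P : Program S} (hP : progNormal P) {r : Rule S}
    (hr : r ∈ grP P) : ∃ a, r.head = [a] := by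
  obtain ⟨r, hr, σ, -, rfl⟩ := hr
  exact List.length_eq_one_iff.1 ((List.length_map _).trans (hP r hr))

theorem HerbrandModelOf.exists_head_mem {P : Program S} {M N : Set (Formula S)}
    (hN : HerbrandModelOf P (reduct P M) N) {r : Rule S} (hr : r ∈ grP P)
    (hneg : ∀ c ∈ r.neg, c.toFormula ∉ M) (hpos : ∀ b ∈ r.pos, b.toFormula ∈ N) :
    ∃ h ∈ r.head, h.toFormula ∈ N :=
  hN.2.1 ⟨r.head, r.pos, [], r.vars⟩ ⟨r, hr, hneg, rfl⟩ hpos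

/-- The Herbrand interpretation consisting of the atoms in `H` and all identities `t = t`. -/
def withIdentities (H : Set (PAtom S)) : Set (Formula S) :=
  PAtom.toFormula '' H ∪ Set.range fun t ↦ .eq t t

theorem toFormula_mem_withIdentities_iff {H : Set (PAtom S)} {a : PAtom S} :
    a.toFormula ∈ withIdentities H ↔ a ∈ H := by
  constructor
  · rintro (⟨b, hb, he⟩ | ⟨t, ht⟩)
    · cases a
      cases b
      cases he
      exact hb
    · cases ht
  · exact fun ha ↦ Or.inl ⟨a, ha, rfl⟩

theorem eq_mem_withIdentities_iff {H : Set (PAtom S)} {t t' : Term S} :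
    .eq t t' ∈ withIdentities H ↔ t = t' := by
  constructor
  · rintro (⟨b, -, he⟩ | ⟨s, hs⟩)
    · cases he
    · cases hs
      rfl
  · rintro rfl
    exact Or.inr ⟨t, rfl⟩

/-! ### Ground models -/

namespace EmbeddingKind

variable (E : EmbeddingKind)

/-- The embedding of the ground rule `r` is true when the atoms in `H` are true and the
formulas in `M` are believed. -/
def RuleHolds (M : Set (Formula S)) (H : Set (PAtom S)) (r : Rule S) : Prop :=
  (∀ b ∈ r.pos, b ∈ H ∧ (E.boxBody → b.toFormula ∈ M)) → (∀ c ∈ r.neg, c.toFormula ∉ M) →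
    ∃ h ∈ r.head, h ∈ H ∧ (E.boxHead → h.toFormula ∈ M)

/-- `H` is a Herbrand model, relative to the beliefs `M`, of the embedding of the grounding
of `P`. -/
structure GroundModel (P : Program S) (M : Set (Formula S)) (H : Set (PAtom S)) : Prop where
  ruleHolds : ∀ r ∈ grP P, E.RuleHolds M H r
  introspection : E.introspective → ∀ a : PAtom S, a.p ∈ progPreds P → a.isGround →
    a ∈ H → a.toFormula ∈ M

/-- `M` consists of the identities and of the ground atoms common to all ground models relative
to `M`: the Herbrand counterpart of `IsAtomicKernel`. -/
structure IsGroundFixpoint (P : Program S) (M : Set (Formula S)) : Prop where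
  herbrandI : HerbrandI M
  eq_mem_iff : ∀ t t' : Term S, t.isGround → t'.isGround → (Formula.eq t t' ∈ M ↔ t = t')
  toFormula_mem_iff : ∀ a : PAtom S, a.isGround →
    (a.toFormula ∈ M ↔ ∀ H, E.GroundModel P M H → a ∈ H)

variable {E} {P : Program S}

theorem sat_matrix_iff {X : Sem} {w : Interp S} {A : Set (Formula S)} (hA : BeliefCongr w A)
    {r : Rule S} (hr : r.head ≠ []) {σ : ℕ → Term S} {B : ℕ → w.U}
    (hσ : Names w σ B fun x ↦ r.hasVar x) :
    Sat X w A (E.matrix r) B ↔ E.RuleHolds A w.trueAtoms (r.applySubst σ) := by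
  have hnames {a : PAtom S} (ha : a ∈ r.atoms) : Names w σ B fun x ↦ a.hasVar x :=
    fun x hx ↦ hσ x ⟨a, ha, hx⟩
  have hliteral (e : Bool) {a : PAtom S} (ha : a ∈ r.atoms) : Sat X w A (a.literal e) B ↔
      a.substA σ ∈ w.trueAtoms ∧ (e → (a.substA σ).toFormula ∈ A) := by
    cases e
    · simp [PAtom.literal, sat_toFormula_iff (hnames ha)]
    · exact (and_congr (sat_toFormula_iff (hnames ha)) (sat_box_toFormula_iff hA (hnames ha))).trans
        (by simp)
  have hpos : (∀ b ∈ r.pos, Sat X w A (b.literal E.boxBody) B) ↔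
      ∀ b ∈ r.pos, b.substA σ ∈ w.trueAtoms ∧ (E.boxBody → (b.substA σ).toFormula ∈ A) :=
    forall₂_congr fun b hb ↦ hliteral _ (by simp [Rule.atoms, hb])
  have hneg : (∀ c ∈ r.neg, Sat X w A c.toFormula.box.not B) ↔
      ∀ c ∈ r.neg, (c.substA σ).toFormula ∉ A :=
    forall₂_congr fun c hc ↦
      not_congr (sat_box_toFormula_iff hA (hnames (by simp [Rule.atoms, hc])))
  have hhead : (∃ h ∈ r.head, Sat X w A (h.literal E.boxHead) B) ↔
      ∃ h ∈ r.head, h.substA σ ∈ w.trueAtoms ∧ (E.boxHead → (h.substA σ).toFormula ∈ A) :=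
    exists_congr fun h ↦ and_congr_right fun hh ↦ hliteral _ (by simp [Rule.atoms, hh])
  rw [matrix, sat_impOf, sat_disjOf (by simpa using hr)]
  simp only [List.forall_mem_append, List.mem_map, exists_exists_and_eq_and, forall_exists_index,
    and_imp, forall_apply_eq_imp_iff₂, hpos, hneg, hhead, RuleHolds, Rule.applySubst]

theorem modelsT_theory_iff {X : Sem} {w : Interp S} {A : Set (Formula S)} :
    ModelsT X w A (E.theory P) ↔ (∀ r ∈ P, ModelsF X w A (E.matrix r)) ∧
      (E.introspective → ModelsT X w A (PIAax P)) ∧ ModelsT X w A (UNAax P) := by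
  have hrules : ModelsT X w A (ruleEmb (fun r ↦ uclosure r.vars (E.matrix r)) P) ↔
      ∀ r ∈ P, ModelsF X w A (E.matrix r) := by
    simp only [ModelsT, ruleEmb, Set.mem_ofPred_eq, forall_exists_index, and_imp,
      forall_comm (α := Formula S), forall_eq, modelsF_uclosure_iff]
  have hpia : ModelsT X w A (bif E.introspective then PIAax P else ∅) ↔
      (E.introspective → ModelsT X w A (PIAax P)) := by
    cases E.introspective <;> simp [ModelsT]
  rw [← hrules, ← hpia, ← and_assoc]
  simp only [ModelsT, theory, Set.mem_union, or_imp, forall_and]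

theorem modelsT_PIAax_iff {X : Sem} {w : Interp S} {A : Set (Formula S)}
    (hF : ∀ f, f ∈ progFuncs P) : ModelsT X w A (PIAax P) ↔
      ∀ a : PAtom S, a.p ∈ progPreds P → a.isGround → a ∈ w.trueAtoms → a.toFormula ∈ A := by
  have hax {a : PAtom S} (ha : a.isGround) (B : ℕ → w.U) :
      Sat X w A (a.toFormula.imp a.toFormula.box) B ↔
        (a ∈ w.trueAtoms → a.toFormula ∈ A) := by
    rw [sat_imp, sat_toFormula_iff_of_isGround ha,
      sat_box_iff_of_isGround (φ := a.toFormula) trivial ha]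
  constructor
  · intro h a hp ha
    refine (hax ha fun _ ↦ w.dflt).1 (h _ ⟨a, hp, fun i ↦ ?_, rfl⟩ _)
    exact (Term.isNameOf_iff_isGround hF).2 (ha i)
  · rintro h _ ⟨a, hp, ha, rfl⟩ B
    have ha : a.isGround := fun i ↦ (ha i).isGround
    exact (hax ha B).2 (h a hp ha)

theorem ruleHolds_congr {M : Set (Formula S)} {H H' : Set (PAtom S)} {r : Rule S}
    (h : ∀ a ∈ r.atoms, a ∈ H ↔ a ∈ H') : E.RuleHolds M H r ↔ E.RuleHolds M H' r := by
  refine imp_congr (forall₂_congr fun b hb ↦ and_congr_left' (h b ?_))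
    (imp_congr_right fun _ ↦
      exists_congr fun a ↦ and_congr_right fun ha ↦ and_congr_left' (h a ?_))
  · simp [Rule.atoms, hb]
  · simp [Rule.atoms, ha]

theorem groundModel_trueAtoms {X : Sem} {w : Interp S} {A : Set (Formula S)}
    (hhead : ∀ r ∈ P, r.head ≠ []) (hF : ∀ f, f ∈ progFuncs P) (hA : BeliefCongr w A)
    (hw : ModelsT X w A (E.theory P)) : E.GroundModel P A w.trueAtoms := by
  obtain ⟨hrules, hpia, -⟩ := modelsT_theory_iff.1 hw
  refine ⟨?_, fun hE ↦ (modelsT_PIAax_iff hF).1 (hpia hE)⟩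
  rintro _ ⟨r, hr, σ, hσ, rfl⟩
  exact (sat_matrix_iff hA (hhead r hr) fun x hx ↦ ⟨(hσ x hx).isGround, rfl⟩).1 (hrules r hr _)

theorem GroundModel.modelsT_herbrandInterp {A : Set (Formula S)} {H : Set (PAtom S)}
    (hH : E.GroundModel P A H) (hhead : ∀ r ∈ P, r.head ≠ []) (hF : ∀ f, f ∈ progFuncs P)
    (hgood : goodSig P) (X : Sem) : ModelsT X (herbrandInterp H) A (E.theory P) := by
  refine modelsT_theory_iff.2 ⟨fun r hr B ↦ ?_, fun hE ↦ ?_, ?_⟩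
  · set σ : ℕ → Term S := fun x ↦ (B x).1
    have hground (x : ℕ) (hx : r.hasVar x) : (σ x).isGround := by
      obtain ⟨t, ht⟩ := exists_isGround_of_hasVar hgood hr hx
      exact (B x).2.resolve_right fun h ↦ h t ht
    have hσ : Names (herbrandInterp H) σ B fun x ↦ r.hasVar x := fun x hx ↦
      ⟨hground x hx, Subtype.ext (herbrandInterp_evalG (hground x hx))⟩
    have hgr : r.applySubst σ ∈ grP P := applySubst_mem_grP hF hr hground
    rw [sat_matrix_iff (beliefCongr_herbrandInterp A) (hhead r hr) hσ]
    refine (ruleHolds_congr fun a ha ↦ ?_).2 (hH.ruleHolds _ hgr)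
    exact mem_trueAtoms_herbrandInterp_iff (isGround_of_mem_grP hgr ha)
  · exact (modelsT_PIAax_iff hF).2 fun a hp ha hmem ↦
      hH.introspection hE a hp ha ((mem_trueAtoms_herbrandInterp_iff ha).1 hmem)
  · exact (modelsT_UNAax_iff hF).2 fun t t' ht ht' he ↦
      Or.inl ((herbrandInterp_evalG_inj ht ht').1 he)

theorem entails_toFormula_iff {X : Sem} {A : Set (Formula S)} (hhead : ∀ r ∈ P, r.head ≠ [])
    (hF : ∀ f, f ∈ progFuncs P) (hgood : goodSig P) (hA : EqReplacementClosed A) {a : PAtom S}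
    (ha : a.isGround) :
    Entails X (E.theory P) A a.toFormula ↔ ∀ H, E.GroundModel P A H → a ∈ H := by
  constructor
  · intro h H hH
    have hmodel := h _ (hH.modelsT_herbrandInterp hhead hF hgood X)
    exact (mem_trueAtoms_herbrandInterp_iff ha).1 ((modelsF_toFormula_iff ha).1 hmodel)
  · intro h w hw
    have hcongr : BeliefCongr w A := hA.beliefCongr hF (modelsT_theory_iff.1 hw).2.2
    exact (modelsF_toFormula_iff ha).2 (h _ (groundModel_trueAtoms hhead hF hcongr hw))

theorem entails_eq_iff {X : Sem} {A : Set (Formula S)} (hhead : ∀ r ∈ P, r.head ≠ [])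
    (hF : ∀ f, f ∈ progFuncs P) (hgood : goodSig P) (hA : ∃ H, E.GroundModel P A H)
    {t t' : Term S} (ht : t.isGround) (ht' : t'.isGround) :
    Entails X (E.theory P) A (.eq t t') ↔ t = t' := by
  constructor
  · intro h
    obtain ⟨H, hH⟩ := hA
    have hmodel := h _ (hH.modelsT_herbrandInterp hhead hF hgood X)
    exact (herbrandInterp_evalG_inj ht ht').1 ((modelsF_eq_iff ht ht').1 hmodel)
  · rintro rfl w -
    exact (modelsF_eq_iff ht ht').2 rfl

theorem exists_groundModel {M : Set (Formula S)} (hhead : ∀ r ∈ P, r.head ≠ [])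
    (hM : ∀ a : PAtom S, a.isGround → (∀ H, E.GroundModel P M H → a ∈ H) → a.toFormula ∈ M) :
    ∃ H, E.GroundModel P M H := by
  -- Otherwise every ground atom is believed, so that the set of all atoms is a ground model.
  by_contra! hnone
  have hbelieved (a : PAtom S) (ha : a.isGround) : a.toFormula ∈ M :=
    hM a ha fun H hH ↦ (hnone H hH).elim
  refine hnone Set.univ ⟨fun r hr _ _ ↦ ?_, fun _ a _ ha _ ↦ hbelieved a ha⟩
  obtain ⟨h, hh⟩ := List.exists_mem_of_ne_nil _ (head_ne_nil_of_mem_grP hhead hr)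
  have hground : h.isGround :=
    isGround_of_mem_grP hr (by simp [Rule.atoms, hh])
  exact ⟨h, hh, trivial, fun _ ↦ hbelieved h hground⟩

theorem isAtomicKernel_theory_iff {X : Sem} {A : Set (Formula S)}
    (hhead : ∀ r ∈ P, r.head ≠ []) (hF : ∀ f, f ∈ progFuncs P) (hgood : goodSig P) :
    IsAtomicKernel X (E.theory P) A ↔ E.IsGroundFixpoint P A := by
  constructor
  · intro hA
    obtain ⟨hherbrand, heq, hatom⟩ := isAtomicKernel_iff.1 hA
    have hatom' (a : PAtom S) (ha : a.isGround) :
        a.toFormula ∈ A ↔ ∀ H, E.GroundModel P A H → a ∈ H :=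
      (hatom a ha).trans (entails_toFormula_iff hhead hF hgood hA.eqReplacementClosed ha)
    have hmodel := exists_groundModel hhead fun a ha ↦ (hatom' a ha).2
    exact ⟨hherbrand, fun t t' ht ht' ↦
      (heq t t' ht ht').trans (entails_eq_iff hhead hF hgood hmodel ht ht'), hatom'⟩
  · intro hA
    have hclosed : EqReplacementClosed A := by
      intro p ts ts' hts hts' hreplace hmem
      have hts_eq : ts = ts' := funext fun i ↦
        (hreplace i).elim id (hA.eq_mem_iff _ _ (hts i) (hts' i)).1
      rwa [← hts_eq]
    have hmodel := exists_groundModel hhead fun a ha ↦ (hA.toFormula_mem_iff a ha).2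
    exact isAtomicKernel_iff.2 ⟨hA.herbrandI, fun t t' ht ht' ↦
      (hA.eq_mem_iff t t' ht ht').trans (entails_eq_iff hhead hF hgood hmodel ht ht').symm,
      fun a ha ↦ (hA.toFormula_mem_iff a ha).trans
        (entails_toFormula_iff hhead hF hgood hclosed ha).symm⟩

/-! ### Stable models -/

theorem GroundModel.exists_head_mem {M : Set (Formula S)} {H : Set (PAtom S)}
    (hH : E.GroundModel P M H) (hE : E.Adequate P) {r : Rule S} (hr : r ∈ grP P)
    (hpos : ∀ b ∈ r.pos, b ∈ H ∧ b.toFormula ∈ M) (hneg : ∀ c ∈ r.neg, c.toFormula ∉ M)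
    (hM : progNormal P → ∃ h ∈ r.head, h.toFormula ∈ M) :
    ∃ h ∈ r.head, h ∈ H ∧ h.toFormula ∈ M := by
  obtain ⟨h, hh, hmem, hbox⟩ :=
    hH.ruleHolds r hr (fun b hb ↦ ⟨(hpos b hb).1, fun _ ↦ (hpos b hb).2⟩) hneg
  refine ⟨h, hh, hmem, ?_⟩
  rcases hE with hE | hE | hE
  · have hatom : h ∈ r.atoms := by simp [Rule.atoms, hh]
    exact hH.introspection hE h (mem_progPreds_of_mem_grP hr hatom)
      (isGround_of_mem_grP hr hatom) hmem
  · exact hbox hE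
  · obtain ⟨a, ha⟩ := hE.exists_head_eq_of_mem_grP hr
    obtain ⟨h', hh', hmem'⟩ := hM hE
    rw [ha, List.mem_singleton] at hh hh'
    rwa [hh, ← hh']

theorem IsGroundFixpoint.herbrandModelOf_reduct {M : Set (Formula S)}
    (hM : E.IsGroundFixpoint P M) (hhead : ∀ r ∈ P, r.head ≠ []) (hE : E.Adequate P) :
    HerbrandModelOf P (reduct P M) M := by
  refine ⟨hM.herbrandI, ?_, fun t ht ↦ (hM.eq_mem_iff t t ht.isGround ht.isGround).2 rfl⟩
  rintro _ ⟨r, hr, hneg, rfl⟩ hpos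
  have hposH (H : Set (PAtom S)) (hH : E.GroundModel P M H) (b : PAtom S) (hb : b ∈ r.pos) :
      b ∈ H ∧ b.toFormula ∈ M :=
    have hground : b.isGround := isGround_of_mem_grP hr (by simp [Rule.atoms, hb])
    ⟨(hM.toFormula_mem_iff b hground).1 (hpos b hb) H hH, hpos b hb⟩
  obtain ⟨H₀, hH₀⟩ := exists_groundModel hhead fun a ha ↦ (hM.toFormula_mem_iff a ha).2
  have hnormal : progNormal P → ∃ h ∈ r.head, h.toFormula ∈ M := by
    intro hP
    obtain ⟨a, ha⟩ := hP.exists_head_eq_of_mem_grP hr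
    have hground : a.isGround := isGround_of_mem_grP hr (by simp [Rule.atoms, ha])
    refine ⟨a, by simp [ha], (hM.toFormula_mem_iff a hground).2 fun H hH ↦ ?_⟩
    obtain ⟨h, hh, hmem, -⟩ := hH.ruleHolds r hr
      (fun b hb ↦ ⟨(hposH H hH b hb).1, fun _ ↦ (hposH H hH b hb).2⟩) hneg
    rw [ha, List.mem_singleton] at hh
    rwa [← hh]
  obtain ⟨h, hh, -, hmem⟩ := hH₀.exists_head_mem hE hr (hposH H₀ hH₀) hneg hnormal
  exact ⟨h, hh, hmem⟩

theorem groundModel_of_herbrandModelOf_reduct {M M' : Set (Formula S)}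
    (hM' : HerbrandModelOf P (reduct P M) M') (hsub : M' ⊆ M) :
    E.GroundModel P M (PAtom.toFormula ⁻¹' M') := by
  refine ⟨fun r hr hpos hneg ↦ ?_, fun _ a _ _ ha ↦ hsub ha⟩
  obtain ⟨h, hh, hmem⟩ := hM'.exists_head_mem hr hneg fun b hb ↦ (hpos b hb).1
  exact ⟨h, hh, hmem, fun _ ↦ hsub hmem⟩

theorem GroundModel.herbrandModelOf_reduct {M : Set (Formula S)} {H : Set (PAtom S)}
    (hH : E.GroundModel P M H) (hM : HerbrandModelOf P (reduct P M) M) (hE : E.Adequate P) :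
    HerbrandModelOf P (reduct P M) (M ∩ withIdentities H) := by
  refine ⟨fun φ hφ ↦ hM.1 φ hφ.1, ?_, fun t ht ↦ ⟨hM.2.2 t ht, eq_mem_withIdentities_iff.2 rfl⟩⟩
  rintro _ ⟨r, hr, hneg, rfl⟩ hpos
  have hposH (b : PAtom S) (hb : b ∈ r.pos) : b ∈ H ∧ b.toFormula ∈ M :=
    ⟨toFormula_mem_withIdentities_iff.1 (hpos b hb).2, (hpos b hb).1⟩
  obtain ⟨h, hh, hmemH, hmemM⟩ := hH.exists_head_mem hE hr hposH hneg fun _ ↦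
    hM.exists_head_mem hr hneg fun b hb ↦ (hposH b hb).2
  exact ⟨h, hh, hmemM, toFormula_mem_withIdentities_iff.2 hmemH⟩

theorem IsGroundFixpoint.isStableModel {M : Set (Formula S)} (hM : E.IsGroundFixpoint P M)
    (hhead : ∀ r ∈ P, r.head ≠ []) (hF : ∀ f, f ∈ progFuncs P) (hE : E.Adequate P) :
    isStableModel P M := by
  refine ⟨hM.herbrandModelOf_reduct hhead hE, fun M' hsub hM' ↦ hsub.antisymm fun φ hφ ↦ ?_⟩
  obtain ⟨hatomic, hground⟩ := hM.herbrandI φ hφ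
  cases φ with
  | atom p ts =>
    exact (hM.toFormula_mem_iff ⟨p, ts⟩ hground).1 hφ _
      (groundModel_of_herbrandModelOf_reduct hM' hsub)
  | eq t t' =>
    obtain rfl := (hM.eq_mem_iff t t' hground.1 hground.2).1 hφ
    exact hM'.2.2 t ((Term.isNameOf_iff_isGround hF).2 hground.1)
  | _ => exact hatomic.elim

theorem isGroundFixpoint_of_isStableModel {M : Set (Formula S)} (hM : isStableModel P M)
    (hF : ∀ f, f ∈ progFuncs P) (hE : E.Adequate P) : E.IsGroundFixpoint P M := by
  obtain ⟨hmodel, hmin⟩ := hM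
  have hground : E.GroundModel P M (PAtom.toFormula ⁻¹' M) :=
    groundModel_of_herbrandModelOf_reduct hmodel subset_rfl
  have hsub (H : Set (PAtom S)) (hH : E.GroundModel P M H) : M ⊆ withIdentities H :=
    Set.inter_eq_left.1 (hmin _ Set.inter_subset_left (hH.herbrandModelOf_reduct hmodel hE))
  refine ⟨hmodel.1, fun t t' ht _ ↦ ⟨fun h ↦ ?_, ?_⟩, fun a _ ↦ ⟨fun h H hH ↦ ?_, fun h ↦ ?_⟩⟩
  · exact eq_mem_withIdentities_iff.1 (hsub _ hground h)
  · rintro rfl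
    exact hmodel.2.2 t ((Term.isNameOf_iff_isGround hF).2 ht)
  · exact toFormula_mem_withIdentities_iff.1 (hsub H hH h)
  · exact h _ hground

theorem exists_stableExp_theory_iff_isStableModel {X : Sem} {M : Set (Formula S)}
    (hhead : ∀ r ∈ P, r.head ≠ []) (hF : ∀ f, f ∈ progFuncs P) (hgood : goodSig P)
    (hE : E.Adequate P) :
    (∃ T, StableExp X (E.theory P) T ∧ ogaOf T = M) ↔ isStableModel P M := by
  rw [exists_stableExp_ogaOf_eq_iff fun _ ↦ E.boxAtomic_of_mem_theory,
    isAtomicKernel_theory_iff hhead hF hgood]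
  exact ⟨fun hM ↦ hM.isStableModel hhead hF hE, fun hM ↦
    isGroundFixpoint_of_isStableModel hM hF hE⟩

theorem expEquivSel_theory {E' : EmbeddingKind} (X : Sem) (hhead : ∀ r ∈ P, r.head ≠ [])
    (hF : ∀ f, f ∈ progFuncs P) (hgood : goodSig P) (hE : E.Adequate P) (hE' : E'.Adequate P) :
    ExpEquivSel X ogaOf (E.theory P) (E'.theory P) :=
  expEquivSel_of_forall_exists_iff fun _ ↦
    (exists_stableExp_theory_iff_isStableModel hhead hF hgood hE).trans
      (exists_stableExp_theory_iff_isStableModel hhead hF hgood hE').symm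

end EmbeddingKind

theorem stmt5_general (X : Sem) (P : Program S) (hwf : progWf P)
    (hF : ∀ f, f ∈ progFuncs P) (hgood : goodSig P) :
    (∀ τ τ' : Program S → Set (Formula S),
        τ ∈ ({tauHPv, tauEBv, tauEHv} : Set (Program S → Set (Formula S))) →
        τ' ∈ ({tauHPv, tauEBv, tauEHv} : Set (Program S → Set (Formula S))) →
        ExpEquivSel X ogaOf (τ P) (τ' P)) ∧
    (progNormal P →
      ∀ τ τ' : Program S → Set (Formula S),
        τ ∈ ({tauHP, tauEB, tauEH, tauHPv, tauEBv, tauEHv} :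
              Set (Program S → Set (Formula S))) →
        τ' ∈ ({tauHP, tauEB, tauEH, tauHPv, tauEBv, tauEHv} :
              Set (Program S → Set (Formula S))) →
        ExpEquivSel X ogaOf (τ P) (τ' P)) := by
  have hhead (r : Rule S) (hr : r ∈ P) : r.head ≠ [] := (hwf r hr).1
  constructor
  · intro τ τ' hτ hτ'
    obtain ⟨E, hE, rfl⟩ := EmbeddingKind.exists_theory_eq_of_mem_disjunctive hτ
    obtain ⟨E', hE', rfl⟩ := EmbeddingKind.exists_theory_eq_of_mem_disjunctive hτ'
    exact EmbeddingKind.expEquivSel_theory X hhead hF hgood (hE.imp_right Or.inl)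
      (hE'.imp_right Or.inl)
  · intro hP τ τ' hτ hτ'
    obtain ⟨E, rfl⟩ := EmbeddingKind.exists_theory_eq_of_mem hτ
    obtain ⟨E', rfl⟩ := EmbeddingKind.exists_theory_eq_of_mem hτ'
    exact EmbeddingKind.expEquivSel_theory X hhead hF hgood (Or.inr (Or.inr hP))
      (Or.inr (Or.inr hP))

end

/-- Theorem on correspondence w.r.t. ground atoms: for every
disjunctive program `P`, the embeddings `τ^∨_HP`, `τ^∨_EB`, `τ^∨_EH` pairwise satisfy
`τ(P) ≡ˣ_oga τ'(P)`; for normal `P` all six embeddings do. -/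
theorem stmt5 {S : Sig} (X : Sem) (P : Program S)
    (hwf : progWf P) (hfull : fullSig P) (hgood : goodSig P) :
    (∀ τ τ' : Program S → Set (Formula S),
        τ ∈ ({tauHPv, tauEBv, tauEHv} : Set (Program S → Set (Formula S))) →
        τ' ∈ ({tauHPv, tauEBv, tauEHv} : Set (Program S → Set (Formula S))) →
        ExpEquivSel X ogaOf (τ P) (τ' P)) ∧
    (progNormal P →
      ∀ τ τ' : Program S → Set (Formula S),
        τ ∈ ({tauHP, tauEB, tauEH, tauHPv, tauEBv, tauEHv} :
              Set (Program S → Set (Formula S))) →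
        τ' ∈ ({tauHP, tauEB, tauEH, tauHPv, tauEBv, tauEHv} :
              Set (Program S → Set (Formula S))) →
        ExpEquivSel X ogaOf (τ P) (τ' P)) :=
  stmt5_general X P hwf hfull.1 hgood
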